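/- arXiv:2112.11256 — 5 statements merged into one kernel-verified Lean document; each statement's English description precedes it below -/
import Mathlib

section
/- Let V be a real inner product space, N ≥ 1, K ≥ 1, let q = (q_1,…,q_N) with q_i > 0 for all i and ∑_{i=1}^N q_i = 1, let p_1,…,p_N be real numbers, let η > 0, let E ≥ 1 be an integer, and let G_1,…,G_N ≥ 0. Suppose Δ_1,…,Δ_N ∈ V satisfy ‖Δ_i‖ ≤ 2·η·E·G_i for all i. Then the sampling variance of the K-sample importance-weighted average is bounded as ∑_{s ∈ {1,…,N}^K} (∏_{k=1}^K q_{s_k}) · ‖ (1/K)·∑_{k=1}^K (p_{s_k}/q_{s_k})·Δ_{s_k} − ∑_{i=1}^N p_i·Δ_i ‖² ≤ (4/K) · ( ∑_{i=1}^N p_i² G_i² / q_i ) · (η·E)². -/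
/-!
The sampled average is an unbiased estimator of `μ = ∑ i, p i • Δ i`: under `q`, the importance
weighted vector `(p i / q i) • Δ i` has mean `μ`. The `K` draws are independent, so the cross terms
in the squared norm of the sum of the centred draws vanish and the variance of their average is
`1 / K` times the variance of one draw. The latter is the second moment
`∑ i, p i ^ 2 * ‖Δ i‖ ^ 2 / q i` minus `‖μ‖ ^ 2`.
-/

theorem sum_smul_sub_sum_smul_eq_zero {ι R M : Type*} [Fintype ι] [Semiring R] [AddCommGroup M]
    [Module R M] {w : ι → R} (hw : ∑ i, w i = 1) (X : ι → M) :
    ∑ i, w i • (X i - ∑ j, w j • X j) = 0 := by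
  simp only [smul_sub, Finset.sum_sub_distrib, ← Finset.sum_smul, hw, one_smul, sub_self]

theorem one_div_card_smul_sum_sub {κ 𝕜 M : Type*} [DivisionRing 𝕜] [AddCommGroup M] [Module 𝕜 M]
    {s : Finset κ} (hs : (s.card : 𝕜) ≠ 0) (x : κ → M) (c : M) :
    (1 / (s.card : 𝕜)) • ∑ k ∈ s, (x k - c) = (1 / (s.card : 𝕜)) • ∑ k ∈ s, x k - c := by
  rw [Finset.sum_sub_distrib, Finset.sum_const, smul_sub, ← Nat.cast_smul_eq_nsmul 𝕜, smul_smul,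
    one_div_mul_cancel hs, one_smul]

section WeightedVariance

variable {V : Type*} [SeminormedAddCommGroup V] [InnerProductSpace ℝ V]

section SingleDraw

variable {ι : Type*} [Fintype ι] {w : ι → ℝ}

theorem sum_mul_norm_add_sq_of_sum_smul_eq_zero (hw : ∑ i, w i = 1) {Y : ι → V}
    (hY : ∑ i, w i • Y i = 0) (v : V) :
    ∑ i, w i * ‖v + Y i‖ ^ 2 = ‖v‖ ^ 2 + ∑ i, w i * ‖Y i‖ ^ 2 := by
  have cross_eq_zero : ∑ i, w i * inner ℝ v (Y i) = 0 := by
    simp only [← real_inner_smul_right, ← inner_sum, hY, inner_zero_right]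
  calc ∑ i, w i * ‖v + Y i‖ ^ 2
      = ∑ i, (w i * ‖v‖ ^ 2 + 2 * (w i * inner ℝ v (Y i)) + w i * ‖Y i‖ ^ 2) := by
        refine Finset.sum_congr rfl fun i _ ↦ ?_
        rw [norm_add_sq_real]
        ring
    _ = (∑ i, w i) * ‖v‖ ^ 2 + 2 * ∑ i, w i * inner ℝ v (Y i) + ∑ i, w i * ‖Y i‖ ^ 2 := by
        rw [Finset.sum_add_distrib, Finset.sum_add_distrib, Finset.sum_mul, Finset.mul_sum]
    _ = ‖v‖ ^ 2 + ∑ i, w i * ‖Y i‖ ^ 2 := by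
        rw [hw, cross_eq_zero, one_mul, mul_zero, add_zero]

theorem sum_mul_norm_sub_sum_smul_sq (hw : ∑ i, w i = 1) (X : ι → V) :
    ∑ i, w i * ‖X i - ∑ j, w j • X j‖ ^ 2 = ∑ i, w i * ‖X i‖ ^ 2 - ‖∑ i, w i • X i‖ ^ 2 := by
  have decomposition := sum_mul_norm_add_sq_of_sum_smul_eq_zero hw
    (sum_smul_sub_sum_smul_eq_zero hw X) (∑ j, w j • X j)
  simp only [add_sub_cancel] at decomposition
  exact eq_sub_of_add_eq' decomposition.symm

end SingleDraw

-- The shift `v` lets the induction close: once the first draw is fixed, `v` absorbs its value.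
theorem sum_prod_mul_norm_add_sum_sq_of_sum_smul_eq_zero {n : ℕ} {α : Fin n → Type*}
    [∀ k, Fintype (α k)] {w : ∀ k, α k → ℝ} (hw : ∀ k, ∑ i, w k i = 1) {Y : ∀ k, α k → V}
    (hY : ∀ k, ∑ i, w k i • Y k i = 0) (v : V) :
    ∑ s : ∀ k, α k, (∏ k, w k (s k)) * ‖v + ∑ k, Y k (s k)‖ ^ 2
      = ‖v‖ ^ 2 + ∑ k, ∑ i, w k i * ‖Y k i‖ ^ 2 := by
  induction n generalizing v with
  | zero => simp
  | succ n ih =>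
    set tailVariance := ∑ k : Fin n, ∑ i, w k.succ i * ‖Y k.succ i‖ ^ 2
    calc ∑ s : ∀ k, α k, (∏ k, w k (s k)) * ‖v + ∑ k, Y k (s k)‖ ^ 2
        = ∑ i, w 0 i * ∑ s : ∀ k : Fin n, α k.succ,
            (∏ k, w k.succ (s k)) * ‖(v + Y 0 i) + ∑ k, Y k.succ (s k)‖ ^ 2 := by
          rw [← (Fin.consEquiv α).sum_comp, Fintype.sum_prod_type]
          simp only [Fin.consEquiv_apply, Fin.prod_univ_succ, Fin.sum_univ_succ, Fin.cons_zero,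
            Fin.cons_succ, Finset.mul_sum, mul_assoc, add_assoc]
      _ = ∑ i, w 0 i * (‖v + Y 0 i‖ ^ 2 + tailVariance) := by
          simp only [ih (fun k ↦ hw k.succ) (fun k ↦ hY k.succ), tailVariance]
      _ = ‖v‖ ^ 2 + ∑ i, w 0 i * ‖Y 0 i‖ ^ 2 + tailVariance := by
          simp only [mul_add, Finset.sum_add_distrib, ← Finset.sum_mul, hw, one_mul,
            sum_mul_norm_add_sq_of_sum_smul_eq_zero (hw 0) (hY 0)]
      _ = ‖v‖ ^ 2 + ∑ k, ∑ i, w k i * ‖Y k i‖ ^ 2 := by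
          rw [Fin.sum_univ_succ, add_assoc]

variable {ι : Type*} [Fintype ι] {K : ℕ}

theorem sum_prod_mul_norm_average_sub_sq (hK : K ≠ 0) {w : ι → ℝ} (hw : ∑ i, w i = 1)
    (X : ι → V) :
    ∑ s : Fin K → ι, (∏ k, w (s k)) * ‖(1 / (K : ℝ)) • ∑ k, X (s k) - ∑ i, w i • X i‖ ^ 2
      = (∑ i, w i * ‖X i - ∑ j, w j • X j‖ ^ 2) / K := by
  set μ := ∑ i, w i • X i
  have variance_sum : ∑ s : Fin K → ι, (∏ k, w (s k)) * ‖∑ k, (X (s k) - μ)‖ ^ 2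
      = K * ∑ i, w i * ‖X i - μ‖ ^ 2 := by
    simpa using sum_prod_mul_norm_add_sum_sq_of_sum_smul_eq_zero (n := K) (fun _ ↦ hw)
      (fun _ ↦ sum_smul_sub_sum_smul_eq_zero hw X) 0
  have centred_average (s : Fin K → ι) :
      (1 / (K : ℝ)) • ∑ k, (X (s k) - μ) = (1 / (K : ℝ)) • ∑ k, X (s k) - μ := by
    simpa only [Finset.card_fin] using one_div_card_smul_sum_sub (𝕜 := ℝ) (s := Finset.univ)
      (by simpa using hK) (fun k ↦ X (s k)) μ
  calc ∑ s : Fin K → ι, (∏ k, w (s k)) * ‖(1 / (K : ℝ)) • ∑ k, X (s k) - μ‖ ^ 2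
      = (1 / (K : ℝ)) ^ 2 * ∑ s : Fin K → ι, (∏ k, w (s k)) * ‖∑ k, (X (s k) - μ)‖ ^ 2 := by
        rw [Finset.mul_sum]
        refine Finset.sum_congr rfl fun s _ ↦ ?_
        rw [← centred_average, norm_smul, mul_pow, Real.norm_eq_abs, sq_abs, mul_left_comm]
    _ = (∑ i, w i * ‖X i - μ‖ ^ 2) / K := by
        rw [variance_sum]
        field_simp

theorem sum_prod_mul_norm_importance_average_sub_sq (hK : K ≠ 0) {q : ι → ℝ}
    (hq : ∀ i, q i ≠ 0) (hqsum : ∑ i, q i = 1) (p : ι → ℝ) (Δ : ι → V) :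
    ∑ s : Fin K → ι, (∏ k, q (s k)) *
        ‖(1 / (K : ℝ)) • (∑ k, (p (s k) / q (s k)) • Δ (s k)) - ∑ i, p i • Δ i‖ ^ 2
      = (∑ i, p i ^ 2 * ‖Δ i‖ ^ 2 / q i - ‖∑ i, p i • Δ i‖ ^ 2) / K := by
  have unbiased : ∑ i, q i • (p i / q i) • Δ i = ∑ i, p i • Δ i := by
    simp only [smul_smul, mul_div_cancel₀ _ (hq _)]
  have second_moment : ∑ i, q i * ‖(p i / q i) • Δ i‖ ^ 2 = ∑ i, p i ^ 2 * ‖Δ i‖ ^ 2 / q i := by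
    refine Finset.sum_congr rfl fun i _ ↦ ?_
    have hqi := hq i
    rw [norm_smul, mul_pow, Real.norm_eq_abs, sq_abs]
    field_simp
  rw [← unbiased, ← second_moment, ← sum_mul_norm_sub_sum_smul_sq hqsum]
  exact sum_prod_mul_norm_average_sub_sq hK hqsum fun i ↦ (p i / q i) • Δ i

theorem stmt_2_general (hK : K ≠ 0) {q : ι → ℝ} (hq : ∀ i, 0 < q i) (hqsum : ∑ i, q i = 1)
    (p : ι → ℝ) {B : ι → ℝ} {Δ : ι → V} (hΔ : ∀ i, ‖Δ i‖ ≤ B i) :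
    ∑ s : Fin K → ι, (∏ k, q (s k)) *
        ‖(1 / (K : ℝ)) • (∑ k, (p (s k) / q (s k)) • Δ (s k)) - ∑ i, p i • Δ i‖ ^ 2
      ≤ (∑ i, p i ^ 2 * B i ^ 2 / q i) / K := by
  rw [sum_prod_mul_norm_importance_average_sub_sq hK (fun i ↦ (hq i).ne') hqsum]
  gcongr
  calc ∑ i, p i ^ 2 * ‖Δ i‖ ^ 2 / q i - ‖∑ i, p i • Δ i‖ ^ 2
      ≤ ∑ i, p i ^ 2 * ‖Δ i‖ ^ 2 / q i := sub_le_self _ (sq_nonneg _)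
    _ ≤ ∑ i, p i ^ 2 * B i ^ 2 / q i := by
        gcongr with i
        · exact (hq i).le
        · exact hΔ i

end WeightedVariance

/-- Inequality (11) of Theorem 1: sampling variance of the `K`-sample
importance-weighted average under bounded local updates `‖Δ_i‖ ≤ 2ηE G_i`. -/
theorem stmt_2 (V : Type*) [NormedAddCommGroup V] [InnerProductSpace ℝ V]
    (N K : ℕ) (hN : 1 ≤ N) (hK : 1 ≤ K)
    (q : Fin N → ℝ) (hq : ∀ i, 0 < q i) (hqsum : ∑ i, q i = 1)
    (p : Fin N → ℝ) (η : ℝ) (hη : 0 < η) (E : ℕ) (hE : 1 ≤ E)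
    (G : Fin N → ℝ) (hG : ∀ i, 0 ≤ G i)
    (Δ : Fin N → V) (hΔ : ∀ i, ‖Δ i‖ ≤ 2 * η * (E : ℝ) * G i) :
    ∑ s : Fin K → Fin N, (∏ k, q (s k)) *
        ‖(1 / (K : ℝ)) • (∑ k, (p (s k) / q (s k)) • Δ (s k)) - ∑ i, p i • Δ i‖ ^ 2
      ≤ (4 / (K : ℝ)) * (∑ i, p i ^ 2 * G i ^ 2 / q i) * (η * (E : ℝ)) ^ 2 := by
  refine (stmt_2_general (Nat.one_le_iff_ne_zero.mp hK) hq hqsum p hΔ).trans_eq ?_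
  simp only [Finset.mul_sum, Finset.sum_mul, Finset.sum_div]
  exact Finset.sum_congr rfl fun i _ ↦ by ring
end

section
/- Let N ≥ 1, let t_1,…,t_N > 0, p_1,…,p_N > 0, and G_1,…,G_N > 0. Define q*_i = ( p_i G_i / √(t_i) ) / ∑_{j=1}^N ( p_j G_j / √(t_j) ) for each i. Then q* lies in the open probability simplex (q*_i > 0 for all i and ∑_i q*_i = 1), it achieves ( ∑_{i=1}^N q*_i t_i ) · ( ∑_{i=1}^N p_i²G_i²/q*_i ) = ( ∑_{i=1}^N √(t_i) · p_i G_i )², and for every q = (q_1,…,q_N) with q_i > 0 for all i and ∑_{i=1}^N q_i = 1 it holds that ( ∑_{i=1}^N q*_i t_i ) · ( ∑_{i=1}^N p_i²G_i²/q*_i ) ≤ ( ∑_{i=1}^N q_i t_i ) · ( ∑_{i=1}^N p_i²G_i²/q_i ); that is, q* is a global minimizer of (∑_i q_i t_i)(∑_i p_i²G_i²/q_i) over the open probability simplex. -/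
/-!
The product `(∑ i, q i * t i) * ∑ i, c i ^ 2 / q i` is invariant under rescaling `q`, so the simplex
constraint costs nothing. By Cauchy–Schwarz it is at least `(∑ i, √(t i) * c i) ^ 2`, with equality
when `q i * t i` and `c i ^ 2 / q i` are proportional, that is when `q i` is proportional to
`c i / √(t i)`.
-/

section Field

variable {ι K : Type*} [Fintype ι] [Field K]

/-- The limiting objective of Problem P3 at sampling weights `q`, for round times `t` and
statistical weights `c`; the paper has `c i = p i * G i`. -/
def samplingCost (t c q : ι → K) : K :=
  (∑ i, q i * t i) * ∑ i, c i ^ 2 / q i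

/-- The probability vector proportional to the weights `w`, provided that their sum is nonzero. -/
def normalizedWeights (w : ι → K) (i : ι) : K :=
  w i / ∑ j, w j

theorem sum_normalizedWeights {w : ι → K} (hw : ∑ i, w i ≠ 0) :
    ∑ i, normalizedWeights w i = 1 := by
  simp only [normalizedWeights, ← Finset.sum_div, div_self hw]

theorem samplingCost_smul (t c q : ι → K) {a : K} (ha : a ≠ 0) :
    samplingCost t c (a • q) = samplingCost t c q := by
  have time_smul : ∑ i, (a • q) i * t i = a * ∑ i, q i * t i := by
    simp only [Pi.smul_apply, smul_eq_mul, mul_assoc, Finset.mul_sum]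
  have variance_smul : ∑ i, c i ^ 2 / (a • q) i = a⁻¹ * ∑ i, c i ^ 2 / q i := by
    rw [Finset.mul_sum]
    refine Finset.sum_congr rfl fun i _ ↦ ?_
    rw [Pi.smul_apply, smul_eq_mul, div_mul_eq_div_div_swap, div_eq_inv_mul]
  rw [samplingCost, samplingCost, time_smul, variance_smul, mul_mul_mul_comm,
    mul_inv_cancel₀ ha, one_mul]

theorem samplingCost_normalizedWeights (t c : ι → K) {w : ι → K} (hw : ∑ i, w i ≠ 0) :
    samplingCost t c (normalizedWeights w) = samplingCost t c w := by
  have normalizedWeights_eq_smul : normalizedWeights w = (∑ i, w i)⁻¹ • w :=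
    funext fun _ ↦ div_eq_inv_mul _ _
  rw [normalizedWeights_eq_smul, samplingCost_smul t c w (inv_ne_zero hw)]

theorem samplingCost_div {t r : ι → K} (hrt : ∀ i, r i ^ 2 = t i) (c : ι → K) :
    samplingCost t c (fun i ↦ c i / r i) = (∑ i, r i * c i) ^ 2 := by
  have time_term (i : ι) : c i / r i * t i = r i * c i := by
    rw [← hrt i]
    field_simp
  have variance_term (i : ι) : c i ^ 2 / (c i / r i) = r i * c i := by
    field_simp
  simp only [samplingCost, time_term, variance_term, ← sq]

end Field

section LinearOrderedField

variable {ι K : Type*} [Fintype ι] [Field K] [LinearOrder K] [IsStrictOrderedRing K]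

theorem normalizedWeights_pos {w : ι → K} (hw : ∀ i, 0 < w i) (i : ι) :
    0 < normalizedWeights w i :=
  div_pos (hw i) (Finset.sum_pos (fun j _ ↦ hw j) ⟨i, Finset.mem_univ i⟩)

theorem sq_sum_mul_le_samplingCost {t r : ι → K} (hrt : ∀ i, r i ^ 2 = t i) (c : ι → K)
    {q : ι → K} (hq : ∀ i, 0 < q i) :
    (∑ i, r i * c i) ^ 2 ≤ samplingCost t c q := by
  have time_nonneg (i : ι) : 0 ≤ q i * t i :=
    mul_nonneg (hq i).le (hrt i ▸ sq_nonneg (r i))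
  have variance_nonneg (i : ι) : 0 ≤ c i ^ 2 / q i :=
    div_nonneg (sq_nonneg (c i)) (hq i).le
  have sq_eq_mul (i : ι) : (r i * c i) ^ 2 = q i * t i * (c i ^ 2 / q i) := by
    have := (hq i).ne'
    rw [← hrt i]
    field_simp
  exact Finset.sum_sq_le_sum_mul_sum_of_sq_le_mul _ (fun i _ ↦ time_nonneg i)
    (fun i _ ↦ variance_nonneg i) fun i _ ↦ (sq_eq_mul i).le

theorem stmt_9_general [Nonempty ι] {t r c : ι → K} (hrt : ∀ i, r i ^ 2 = t i)
    (hr : ∀ i, 0 < r i) (hc : ∀ i, 0 < c i) :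
    (∀ i, 0 < normalizedWeights (fun j ↦ c j / r j) i) ∧
    ∑ i, normalizedWeights (fun j ↦ c j / r j) i = 1 ∧
    samplingCost t c (normalizedWeights fun j ↦ c j / r j) = (∑ i, r i * c i) ^ 2 ∧
    ∀ q : ι → K, (∀ i, 0 < q i) →
      samplingCost t c (normalizedWeights fun j ↦ c j / r j) ≤ samplingCost t c q := by
  have weight_pos (i : ι) : 0 < c i / r i := div_pos (hc i) (hr i)
  have sum_ne_zero : ∑ i, c i / r i ≠ 0 :=
    (Finset.sum_pos (fun i _ ↦ weight_pos i) Finset.univ_nonempty).ne'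
  have cost_eq : samplingCost t c (normalizedWeights fun j ↦ c j / r j) = (∑ i, r i * c i) ^ 2 :=
    (samplingCost_normalizedWeights t c sum_ne_zero).trans (samplingCost_div hrt c)
  exact ⟨normalizedWeights_pos weight_pos, sum_normalizedWeights sum_ne_zero, cost_eq,
    fun q hq ↦ cost_eq.trans_le (sq_sum_mul_le_samplingCost hrt c hq)⟩

end LinearOrderedField

/-- Corollary 2: the sampling probabilities `q*_i = (p_iG_i/√t_i)/∑_j (p_jG_j/√t_j)`
lie in the open probability simplex, achieve the value `(∑_i √t_i · p_iG_i)²`, and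
globally minimize `(∑_i q_i t_i)(∑_i p_i²G_i²/q_i)` over the open probability simplex. -/
theorem stmt_9 (N : ℕ) (hN : 1 ≤ N) (t p G : Fin N → ℝ)
    (ht : ∀ i, 0 < t i) (hp : ∀ i, 0 < p i) (hG : ∀ i, 0 < G i) :
    (∀ i, 0 < (p i * G i / Real.sqrt (t i)) / ∑ j, p j * G j / Real.sqrt (t j)) ∧
    (∑ i, (p i * G i / Real.sqrt (t i)) / ∑ j, p j * G j / Real.sqrt (t j)) = 1 ∧
    (∑ i, ((p i * G i / Real.sqrt (t i)) / ∑ j, p j * G j / Real.sqrt (t j)) * t i) *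
        (∑ i, p i ^ 2 * G i ^ 2 /
          ((p i * G i / Real.sqrt (t i)) / ∑ j, p j * G j / Real.sqrt (t j)))
      = (∑ i, Real.sqrt (t i) * (p i * G i)) ^ 2 ∧
    ∀ q : Fin N → ℝ, (∀ i, 0 < q i) → (∑ i, q i) = 1 →
      (∑ i, ((p i * G i / Real.sqrt (t i)) / ∑ j, p j * G j / Real.sqrt (t j)) * t i) *
          (∑ i, p i ^ 2 * G i ^ 2 /
            ((p i * G i / Real.sqrt (t i)) / ∑ j, p j * G j / Real.sqrt (t j)))
        ≤ (∑ i, q i * t i) * (∑ i, p i ^ 2 * G i ^ 2 / q i) := by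
  have : Nonempty (Fin N) := Fin.pos_iff_nonempty.mp hN
  obtain ⟨pos, sum_eq, cost_eq, cost_le⟩ := stmt_9_general (fun i ↦ Real.sq_sqrt (ht i).le)
    (fun i ↦ Real.sqrt_pos.mpr (ht i)) (fun i ↦ mul_pos (hp i) (hG i))
  simp only [samplingCost, mul_pow] at cost_eq cost_le
  exact ⟨pos, sum_eq, cost_eq, fun q hq _ ↦ cost_le q hq⟩
end

section
/- Let t_1, t_2 > 0, p_1, p_2 > 0, G_1, G_2 > 0, α > 0, and β ≥ 0. Then the function f : ℝ² → ℝ defined by f(q_1, q_2) = (q_1 t_1 + q_2 t_2) · ( α·( p_1²G_1²/q_1 + p_2²G_2²/q_2 ) + β ) is NOT convex on the open positive quadrant { (q_1, q_2) : q_1 > 0, q_2 > 0 }. -/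
/-!
Subtracting the linear part `β ∑ qₖ tₖ` from the objective leaves `α (∑ qₖ tₖ) (∑ pₖ² Gₖ² / qₖ)`,
which is homogeneous of degree `0`. A convex function `f` of this kind on an open cone is constant:
rescaling `u` and `v` separately in the convexity inequality gives `f (u + v) ≤ θ f u + (1 - θ) f v`
for every `θ ∈ (0, 1)`, so `f (u + v) ≤ f v`, and `w = (w - ε v) + ε v` then yields `f w ≤ f v` for
all `w` and `v`. But as a function of `qᵢ` alone the product has the form `c₁ qᵢ + c₂ / qᵢ + c₃`,
and `c₂ = α pᵢ² Gᵢ² ∑_{k ≠ i} qₖ tₖ` does not vanish for all values of the other variables.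
-/

open Set Filter Topology

section DegreeZero

variable {E : Type*} [AddCommGroup E] [Module ℝ E] {C : Set E} {f : E → ℝ}

theorem apply_add_le_of_convexOn_of_apply_smul_eq (hf : ConvexOn ℝ C f)
    (hC : ∀ c : ℝ, 0 < c → ∀ x ∈ C, c • x ∈ C)
    (hhom : ∀ c : ℝ, 0 < c → ∀ x ∈ C, f (c • x) = f x) {u v : E} (hu : u ∈ C) (hv : v ∈ C) :
    f (u + v) ≤ f v := by
  have le_combo : ∀ θ ∈ Ioo (0 : ℝ) 1, f (u + v) ≤ θ * f u + (1 - θ) * f v := by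
    rintro θ ⟨hθ₀, hθ₁⟩
    have hθ' : 0 < 1 - θ := sub_pos.2 hθ₁
    have h := hf.2 (hC θ⁻¹ (inv_pos.2 hθ₀) u hu) (hC (1 - θ)⁻¹ (inv_pos.2 hθ') v hv)
      hθ₀.le hθ'.le (add_sub_cancel θ 1)
    rwa [smul_inv_smul₀ hθ₀.ne', smul_inv_smul₀ hθ'.ne', hhom _ (inv_pos.2 hθ₀) u hu,
      hhom _ (inv_pos.2 hθ') v hv] at h
  have tendsto_combo : Tendsto (fun θ : ℝ => θ * f u + (1 - θ) * f v) (𝓝[>] 0) (𝓝 (f v)) := by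
    have hcont : Continuous fun θ : ℝ => θ * f u + (1 - θ) * f v := by fun_prop
    simpa using (hcont.tendsto 0).mono_left nhdsWithin_le_nhds
  exact ge_of_tendsto tendsto_combo
    (eventually_of_mem (Ioo_mem_nhdsGT zero_lt_one) le_combo)

variable [TopologicalSpace E] [IsTopologicalAddGroup E] [ContinuousSMul ℝ E]

theorem exists_pos_sub_smul_mem (hopen : IsOpen C) {u : E} (hu : u ∈ C) (v : E) :
    ∃ ε : ℝ, 0 < ε ∧ u - ε • v ∈ C := by
  have hcont : Continuous fun ε : ℝ => u - ε • v := by fun_prop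
  have hmem : ∀ᶠ ε : ℝ in 𝓝 0, u - ε • v ∈ C :=
    hcont.continuousAt.eventually_mem (hopen.mem_nhds (by simpa using hu))
  exact ((eventually_mem_nhdsWithin (s := Ioi 0)).and (hmem.filter_mono nhdsWithin_le_nhds)).exists

theorem apply_eq_of_convexOn_of_apply_smul_eq (hf : ConvexOn ℝ C f) (hopen : IsOpen C)
    (hC : ∀ c : ℝ, 0 < c → ∀ x ∈ C, c • x ∈ C)
    (hhom : ∀ c : ℝ, 0 < c → ∀ x ∈ C, f (c • x) = f x) {u v : E} (hu : u ∈ C) (hv : v ∈ C) :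
    f u = f v := by
  have apply_le : ∀ u ∈ C, ∀ v ∈ C, f u ≤ f v := by
    intro u hu v hv
    obtain ⟨ε, hε, hmem⟩ := exists_pos_sub_smul_mem hopen hu v
    calc f u = f (u - ε • v + ε • v) := by rw [sub_add_cancel]
      _ ≤ f (ε • v) :=
        apply_add_le_of_convexOn_of_apply_smul_eq hf hC hhom hmem (hC ε hε v hv)
      _ = f v := hhom ε hε v hv
  exact (apply_le u hu v hv).antisymm (apply_le v hv u hu)

theorem linear_mul_eq_of_convexOn_linear_mul_add {ℓ : E →ₗ[ℝ] ℝ} {h : E → ℝ} {β : ℝ}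
    (hf : ConvexOn ℝ C fun x => ℓ x * (h x + β)) (hopen : IsOpen C)
    (hC : ∀ c : ℝ, 0 < c → ∀ x ∈ C, c • x ∈ C)
    (hhom : ∀ c : ℝ, 0 < c → ∀ x ∈ C, h (c • x) = c⁻¹ * h x) {u v : E} (hu : u ∈ C) (hv : v ∈ C) :
    ℓ u * h u = ℓ v * h v := by
  have hconv : ConvexOn ℝ C fun x => ℓ x * h x :=
    (hf.sub ((β • ℓ).concaveOn hf.1)).congr fun x _ => by
      simp only [Pi.sub_apply, LinearMap.smul_apply, smul_eq_mul]
      ring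
  refine apply_eq_of_convexOn_of_apply_smul_eq hconv hopen hC (fun c hc x hx => ?_) hu hv
  rw [map_smul, hhom c hc x hx, smul_eq_mul]
  field_simp

end DegreeZero

theorem mul_eq_zero_of_forall_affine_mul_eq {a b r s c : ℝ}
    (h : ∀ x : ℝ, 0 < x → (x * r + s) * (a / x + b) = c) : a * s = 0 := by
  have h₁ := h 1 one_pos
  have h₂ := h 2 two_pos
  have h₄ := h 4 four_pos
  linarith

section PositiveOrthant

variable {ι : Type*}

theorem isOpen_setOf_forall_pos [Finite ι] : IsOpen {q : ι → ℝ | ∀ k, 0 < q k} := by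
  simpa only [Set.pi, mem_univ, true_imp_iff, mem_Ioi] using
    isOpen_set_pi (finite_univ (α := ι)) fun _ _ => isOpen_Ioi (a := (0 : ℝ))

theorem eq_zero_of_forall_pos_sum_mul_eq_zero {s : Finset ι} {t : ι → ℝ}
    (h : ∀ q : ι → ℝ, (∀ k, 0 < q k) → ∑ k ∈ s, q k * t k = 0) {j : ι} (hj : j ∈ s) : t j = 0 := by
  classical
  have hpos : ∀ k, 0 < (1 + Pi.single j 1 : ι → ℝ) k := fun k =>
    add_pos_of_pos_of_nonneg one_pos ((Pi.single_nonneg.2 zero_le_one : (0 : ι → ℝ) ≤ _) k)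
  calc t j = ∑ k ∈ s, (1 + Pi.single j 1 : ι → ℝ) k * t k - ∑ k ∈ s, (1 : ι → ℝ) k * t k := by
        simp [add_mul, Finset.sum_add_distrib, Pi.single_apply, hj]
    _ = 0 := by rw [h _ hpos, h 1 fun _ => one_pos, sub_zero]

variable [Fintype ι] {a t : ι → ℝ} {i j : ι}

theorem mul_eq_zero_of_forall_pos_sum_mul_sum_div_eq {c : ℝ}
    (h : ∀ q : ι → ℝ, (∀ k, 0 < q k) → (∑ k, q k * t k) * ∑ k, a k / q k = c) (hij : i ≠ j) :
    a i * t j = 0 := by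
  classical
  have mul_sum_eq_zero (q : ι → ℝ) (hq : ∀ k, 0 < q k) : a i * ∑ k ∈ {i}ᶜ, q k * t k = 0 := by
    refine mul_eq_zero_of_forall_affine_mul_eq (r := t i) (b := ∑ k ∈ {i}ᶜ, a k / q k) (c := c)
      fun x hx => ?_
    have hpos : ∀ k, 0 < Function.update q i x k :=
      (Function.forall_update_iff q fun _ y => 0 < y).2 ⟨hx, fun k _ => hq k⟩
    have sum_update (g : ι → ℝ → ℝ) :
        ∑ k, g k (Function.update q i x k) = g i x + ∑ k ∈ {i}ᶜ, g k (q k) := by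
      rw [Fintype.sum_eq_add_sum_compl i, Function.update_self]
      refine congrArg _ (Finset.sum_congr rfl fun k hk => ?_)
      rw [Function.update_of_ne (by simpa using hk)]
    rw [← sum_update fun k y => y * t k, ← sum_update fun k y => a k / y]
    exact h _ hpos
  by_contra hne
  obtain ⟨hai, htj⟩ := mul_ne_zero_iff.1 hne
  exact htj <| eq_zero_of_forall_pos_sum_mul_eq_zero
    (fun q hq => (mul_eq_zero.1 (mul_sum_eq_zero q hq)).resolve_left hai)
    (by simpa using hij.symm)

theorem mul_eq_zero_of_convexOn_sum_mul_sum_div_add {β : ℝ}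
    (hf : ConvexOn ℝ {q : ι → ℝ | ∀ k, 0 < q k}
      fun q => (∑ k, q k * t k) * (∑ k, a k / q k + β))
    (hij : i ≠ j) : a i * t j = 0 := by
  have hlin (q : ι → ℝ) : ∑ k, q k * t k = Fintype.linearCombination ℝ t q := by
    simp only [Fintype.linearCombination_apply, smul_eq_mul]
  have hconst (q : ι → ℝ) (hq : ∀ k, 0 < q k) :
      (∑ k, q k * t k) * ∑ k, a k / q k =
        (∑ k, (1 : ι → ℝ) k * t k) * ∑ k, a k / (1 : ι → ℝ) k := by
    simp only [hlin] at hf ⊢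
    refine linear_mul_eq_of_convexOn_linear_mul_add (h := fun q => ∑ k, a k / q k) hf
      isOpen_setOf_forall_pos (fun c hc q hq k => mul_pos hc (hq k)) (fun c _ q _ => ?_) hq
      fun _ => one_pos
    simp only [Pi.smul_apply, smul_eq_mul, Finset.mul_sum, div_eq_mul_inv, mul_inv, mul_left_comm]
  exact mul_eq_zero_of_forall_pos_sum_mul_sum_div_eq hconst hij

end PositiveOrthant

theorem stmt_10_general {ι : Type*} [Fintype ι] (t p G : ι → ℝ) (α β : ℝ) {i j : ι} (hij : i ≠ j)
    (ht : t j ≠ 0) (hp : p i ≠ 0) (hG : G i ≠ 0) (hα : α ≠ 0) :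
    ¬ ConvexOn ℝ {q : ι → ℝ | ∀ k, 0 < q k}
        (fun q => (∑ k, q k * t k) * (α * ∑ k, p k ^ 2 * G k ^ 2 / q k + β)) := by
  intro hf
  simp only [Finset.mul_sum, ← mul_div_assoc] at hf
  have hzero := mul_eq_zero_of_convexOn_sum_mul_sum_div_add
    (a := fun k => α * (p k ^ 2 * G k ^ 2)) hf hij
  exact mul_ne_zero (mul_ne_zero hα (mul_ne_zero (pow_ne_zero 2 hp) (pow_ne_zero 2 hG))) ht hzero

/-- Theorem 3 (non-convexity of Problem P3) for `N = 2`: the objective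
`f(q₁,q₂) = (q₁t₁ + q₂t₂)(α(p₁²G₁²/q₁ + p₂²G₂²/q₂) + β)` is not convex on the
open positive quadrant. -/
theorem stmt_10 (t₁ t₂ p₁ p₂ G₁ G₂ α β : ℝ)
    (ht₁ : 0 < t₁) (ht₂ : 0 < t₂) (hp₁ : 0 < p₁) (hp₂ : 0 < p₂)
    (hG₁ : 0 < G₁) (hG₂ : 0 < G₂) (hα : 0 < α) (hβ : 0 ≤ β) :
    ¬ ConvexOn ℝ {x : ℝ × ℝ | 0 < x.1 ∧ 0 < x.2}
        (fun x : ℝ × ℝ =>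
          (x.1 * t₁ + x.2 * t₂) *
            (α * (p₁ ^ 2 * G₁ ^ 2 / x.1 + p₂ ^ 2 * G₂ ^ 2 / x.2) + β)) := by
  intro hf
  refine stmt_10_general ![t₁, t₂] ![p₁, p₂] ![G₁, G₂] α β zero_ne_one ht₂.ne' hp₁.ne' hG₁.ne'
    hα.ne' ?_
  simpa [Function.comp_def, Fin.sum_univ_two, Fin.forall_fin_two] using
    hf.comp_linearMap (LinearEquiv.finTwoArrow ℝ ℝ).toLinearMap
end

section
/- Let N ≥ 2, let t_1,…,t_N ≥ 0, p_1,…,p_N ≥ 0, G_1,…,G_N ≥ 0, α ≥ 0, β ≥ 0, and let q = (q_1,…,q_N) with q_k > 0 for all k. Define g(q) = ( ∑_{k=1}^N q_k t_k ) · ( α ∑_{k=1}^N p_k²G_k²/q_k + β ). Suppose i ≠ j are indices with t_i ≤ t_j, p_i G_i ≥ p_j G_j, and q_i ≤ q_j, and let q' be obtained from q by swapping coordinates i and j (q'_i = q_j, q'_j = q_i, and q'_k = q_k for k ∉ {i,j}). Then g(q') ≤ g(q). -/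
/-!
The objective is a product of two nonnegative factors, and the rearrangement inequality bounds each
of them: a permutation does not increase `∑ k, q k * t k` when `q` and `t` vary in the same
direction on the entries it moves, and it does not increase `∑ k, w k / q k` when `q` and `w` vary
in opposite directions there, since then `q⁻¹` and `w` vary in the same direction.
-/

open Equiv

section Rearrangement

variable {ι α β : Type*}

theorem sum_comp_perm_smul_le_sum_smul_of_monovaryOn_moved [Semiring α] [LinearOrder α]
    [IsStrictOrderedRing α] [ExistsAddOfLE α] [AddCommMonoid β] [LinearOrder β]
    [IsOrderedCancelAddMonoid β] [Module α β] [PosSMulMono α β] {s : Finset ι} {σ : Perm ι}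
    {f : ι → α} {g : ι → β} (hfg : MonovaryOn f g {k | σ k ≠ k}) (hσ : {k | σ k ≠ k} ⊆ s) :
    ∑ k ∈ s, f (σ k) • g k ≤ ∑ k ∈ s, f k • g k := by
  classical
  have moved_le : ∑ k ∈ s with σ k ≠ k, f (σ k) • g k ≤ ∑ k ∈ s with σ k ≠ k, f k • g k :=
    (hfg.subset fun _ hk => (Finset.mem_filter.mp hk).2).sum_comp_perm_smul_le_sum_smul
      fun _ hk => Finset.mem_filter.mpr ⟨hσ hk, hk⟩
  have fixed_eq : ∑ k ∈ s with ¬σ k ≠ k, f (σ k) • g k = ∑ k ∈ s with ¬σ k ≠ k, f k • g k :=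
    Finset.sum_congr rfl fun k hk => by rw [not_ne_iff.mp (Finset.mem_filter.mp hk).2]
  rw [← Finset.sum_filter_add_sum_filter_not s (fun k => σ k ≠ k), fixed_eq,
    ← Finset.sum_filter_add_sum_filter_not s (fun k => σ k ≠ k) fun k => f k • g k]
  gcongr 1

theorem monovaryOn_pair_of_le [Preorder α] [Preorder β] {f : ι → α} {g : ι → β} {i j : ι}
    (hf : f i ≤ f j) (hg : g i ≤ g j) : MonovaryOn f g {i, j} := by
  rintro a (rfl | rfl) b (rfl | rfl) hab
  exacts [le_rfl, hf, (hab.not_ge hg).elim, le_rfl]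

theorem antivaryOn_pair_of_le [Preorder α] [Preorder β] {f : ι → α} {g : ι → β} {i j : ι}
    (hf : f i ≤ f j) (hg : g j ≤ g i) : AntivaryOn f g {i, j} :=
  (monovaryOn_pair_of_le (β := βᵒᵈ) hf hg).dual_right

end Rearrangement

section SamplingObjective

variable {ι 𝕜 : Type*} [Fintype ι] [Field 𝕜] [LinearOrder 𝕜] [IsStrictOrderedRing 𝕜]
  {t w q : ι → 𝕜} {α β : 𝕜}

/-- The objective `g(q)` of Problem P3 as a function of the sampling probabilities `q`: the
expected round time times the factor from the convergence bound. The weight `w k` stands for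
`p_k² G_k²`. Because `x / 0 = 0`, it is meaningful only where all `q k` are nonzero. -/
def samplingObjective (t w : ι → 𝕜) (α β : 𝕜) (q : ι → 𝕜) : 𝕜 :=
  (∑ k, q k * t k) * (α * ∑ k, w k / q k + β)

theorem samplingObjective_comp_perm_le {σ : Perm ι} (ht : ∀ k, 0 ≤ t k) (hw : ∀ k, 0 ≤ w k)
    (hα : 0 ≤ α) (hβ : 0 ≤ β) (hq : ∀ k, 0 < q k) (hqt : MonovaryOn q t {k | σ k ≠ k})
    (hqw : AntivaryOn q w {k | σ k ≠ k}) :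
    samplingObjective t w α β (q ∘ σ) ≤ samplingObjective t w α β q := by
  have moved_subset : {k | σ k ≠ k} ⊆ ((Finset.univ : Finset ι) : Set ι) :=
    fun k _ => Finset.mem_univ k
  have time_le : ∑ k, q (σ k) * t k ≤ ∑ k, q k * t k :=
    sum_comp_perm_smul_le_sum_smul_of_monovaryOn_moved hqt moved_subset
  have variance_le : ∑ k, w k / q (σ k) ≤ ∑ k, w k / q k := by
    have inv_monovaryOn : MonovaryOn q⁻¹ w {k | σ k ≠ k} :=
      (monovaryOn_inv_left₀ fun k _ => hq k).mpr hqw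
    simp only [div_eq_inv_mul]
    exact sum_comp_perm_smul_le_sum_smul_of_monovaryOn_moved inv_monovaryOn moved_subset
  have time_nonneg : 0 ≤ ∑ k, q k * t k :=
    Finset.sum_nonneg fun k _ => mul_nonneg (hq k).le (ht k)
  have variance_nonneg : 0 ≤ ∑ k, w k / q (σ k) :=
    Finset.sum_nonneg fun k _ => div_nonneg (hw k) (hq (σ k)).le
  simp only [samplingObjective, Function.comp_apply]
  gcongr

theorem stmt_11_general [DecidableEq ι] {p G : ι → 𝕜} {i j : ι} (ht : ∀ k, 0 ≤ t k) (hα : 0 ≤ α)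
    (hβ : 0 ≤ β) (hq : ∀ k, 0 < q k) (htij : t i ≤ t j) (hpg : |p j * G j| ≤ |p i * G i|)
    (hqij : q i ≤ q j) :
    samplingObjective t (fun k => p k ^ 2 * G k ^ 2) α β (q ∘ swap i j) ≤
      samplingObjective t (fun k => p k ^ 2 * G k ^ 2) α β q := by
  have weight_le : p j ^ 2 * G j ^ 2 ≤ p i ^ 2 * G i ^ 2 := by
    simpa only [mul_pow] using sq_le_sq.mpr hpg
  have moved_subset : {k | swap i j k ≠ k} ⊆ {i, j} := fun _ => eq_or_eq_of_swap_apply_ne_self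
  exact samplingObjective_comp_perm_le ht (fun k => by positivity) hα hβ hq
    ((monovaryOn_pair_of_le hqij htij).subset moved_subset)
    ((antivaryOn_pair_of_le hqij weight_le).subset moved_subset)

end SamplingObjective

/-- Exchange argument in Theorem 4 (non-strict form): if client `i` is no slower
(`t_i ≤ t_j`) and at least as statistically important (`p_iG_i ≥ p_jG_j`) but sampled
with at most the probability of client `j`, swapping the two sampling probabilities
does not increase the Problem P3 objective
`g(q) = (∑_k q_k t_k)(α ∑_k p_k²G_k²/q_k + β)`. -/
theorem stmt_11 (N : ℕ) (hN : 2 ≤ N) (t p G : Fin N → ℝ)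
    (ht : ∀ k, 0 ≤ t k) (hp : ∀ k, 0 ≤ p k) (hG : ∀ k, 0 ≤ G k)
    (α β : ℝ) (hα : 0 ≤ α) (hβ : 0 ≤ β)
    (q : Fin N → ℝ) (hq : ∀ k, 0 < q k)
    (i j : Fin N) (hij : i ≠ j)
    (htij : t i ≤ t j) (hpg : p i * G i ≥ p j * G j) (hqij : q i ≤ q j) :
    (∑ k, q (Equiv.swap i j k) * t k) *
        (α * ∑ k, p k ^ 2 * G k ^ 2 / q (Equiv.swap i j k) + β)
      ≤ (∑ k, q k * t k) * (α * ∑ k, p k ^ 2 * G k ^ 2 / q k + β) :=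
  stmt_11_general ht hα hβ hq htij (abs_le_abs_of_nonneg (mul_nonneg (hp j) (hG j)) hpg) hqij
end

section
/- Let N ≥ 2, let t_1,…,t_N > 0, p_1,…,p_N > 0, G_1,…,G_N > 0, α > 0, β ≥ 0, and let q = (q_1,…,q_N) with q_k > 0 for all k. Define g(q) = ( ∑_{k=1}^N q_k t_k ) · ( α ∑_{k=1}^N p_k²G_k²/q_k + β ). Suppose i ≠ j are indices with t_i ≤ t_j, p_i G_i ≥ p_j G_j, q_i < q_j, and additionally either t_i < t_j or p_i G_i > p_j G_j. Let q' be obtained from q by swapping coordinates i and j (q'_i = q_j, q'_j = q_i, and q'_k = q_k for k ∉ {i,j}). Then g(q') < g(q). -/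
/-!
The swap changes `∑ q_k t_k` by `-(q_j - q_i)(t_j - t_i) ≤ 0` and `∑ w_k / q_k` by
`-(1/q_i - 1/q_j)(w_i - w_j) ≤ 0`, where `w_k = (p_k G_k)²`. So neither of the two positive factors
of the objective increases, and the one in which the strict comparison holds strictly decreases.
-/

open Finset Equiv

section SwapSums

variable {ι R : Type*} [Fintype ι] [DecidableEq ι]

theorem sum_comp_swap_mul [NonUnitalNonAssocRing R] (f a : ι → R) (i j : ι) :
    ∑ k, f (swap i j k) * a k = ∑ k, f k * a k - (f j - f i) * (a j - a i) := by
  obtain rfl | hij := eq_or_ne i j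
  · simp
  have change : ∑ k, (f (swap i j k) * a k - f k * a k) = -((f j - f i) * (a j - a i)) := by
    rw [Fintype.sum_eq_add i j hij fun k hk ↦ by rw [swap_apply_of_ne_of_ne hk.1 hk.2, sub_self],
      swap_apply_left, swap_apply_right]
    simp only [sub_mul, mul_sub]
    abel
  rw [sum_sub_distrib] at change
  rw [sub_eq_add_neg, ← change, add_sub_cancel]

theorem sum_comp_swap_mul_le_sum_mul [Ring R] [PartialOrder R] [IsOrderedRing R]
    {f a : ι → R} {i j : ι} (hf : f i ≤ f j) (ha : a i ≤ a j) :
    ∑ k, f (swap i j k) * a k ≤ ∑ k, f k * a k := by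
  rw [sum_comp_swap_mul]
  exact sub_le_self _ (mul_nonneg (sub_nonneg.2 hf) (sub_nonneg.2 ha))

theorem sum_comp_swap_mul_lt_sum_mul [Ring R] [PartialOrder R] [IsStrictOrderedRing R]
    {f a : ι → R} {i j : ι} (hf : f i < f j) (ha : a i < a j) :
    ∑ k, f (swap i j k) * a k < ∑ k, f k * a k := by
  rw [sum_comp_swap_mul]
  exact sub_lt_self _ (mul_pos (sub_pos.2 hf) (sub_pos.2 ha))

end SwapSums

section Objective

variable {ι K : Type*} [Fintype ι] [Field K]

/-- The objective of Problem P3: the expected round time `∑ q_k t_k` times the convergence-bound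
factor `α ∑ w_k / q_k + β`. The statistical importance of client `k` enters only through the
weight `w k`, which is `p_k² G_k²` in the paper. -/
def p3Objective (α β : K) (t w q : ι → K) : K :=
  (∑ k, q k * t k) * (α * ∑ k, w k / q k + β)

variable [LinearOrder K] [IsStrictOrderedRing K] [DecidableEq ι] {w q : ι → K} {i j : ι}

theorem sum_div_comp_swap_le_sum_div (hqi : 0 < q i) (hq : q i ≤ q j) (hw : w j ≤ w i) :
    ∑ k, w k / q (swap i j k) ≤ ∑ k, w k / q k := by
  simp only [div_eq_inv_mul, swap_comm i j]
  exact sum_comp_swap_mul_le_sum_mul (f := q⁻¹) (inv_anti₀ hqi hq) hw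

theorem sum_div_comp_swap_lt_sum_div (hqi : 0 < q i) (hq : q i < q j) (hw : w j < w i) :
    ∑ k, w k / q (swap i j k) < ∑ k, w k / q k := by
  simp only [div_eq_inv_mul, swap_comm i j]
  exact sum_comp_swap_mul_lt_sum_mul (f := q⁻¹) (inv_strictAnti₀ hqi hq) hw

theorem stmt_12_general {α β : K} {t : ι → K} (hα : 0 < α) (hβ : 0 ≤ β)
    (ht : ∀ k, 0 < t k) (hw : ∀ k, 0 < w k) (hq : ∀ k, 0 < q k)
    (hqij : q i < q j) (htij : t i ≤ t j) (hwij : w j ≤ w i) (hstrict : t i < t j ∨ w j < w i) :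
    p3Objective α β t w (q ∘ swap i j) < p3Objective α β t w q := by
  have time_pos : 0 < ∑ k, q k * t k :=
    sum_pos (fun k _ ↦ mul_pos (hq k) (ht k)) ⟨i, mem_univ i⟩
  have bound_pos : 0 < α * ∑ k, w k / q (swap i j k) + β :=
    add_pos_of_pos_of_nonneg
      (mul_pos hα (sum_pos (fun k _ ↦ div_pos (hw k) (hq _)) ⟨i, mem_univ i⟩)) hβ
  obtain htlt | hwlt := hstrict
  · have time_lt := sum_comp_swap_mul_lt_sum_mul hqij htlt
    have bound_le : α * ∑ k, w k / q (swap i j k) + β ≤ α * ∑ k, w k / q k + β := by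
      gcongr α * ?_ + β
      exact sum_div_comp_swap_le_sum_div (hq i) hqij.le hwij
    exact mul_lt_mul time_lt bound_le bound_pos time_pos.le
  · have time_le := sum_comp_swap_mul_le_sum_mul hqij.le htij
    have bound_lt : α * ∑ k, w k / q (swap i j k) + β < α * ∑ k, w k / q k + β := by
      gcongr α * ?_ + β
      exact sum_div_comp_swap_lt_sum_div (hq i) hqij hwlt
    exact mul_lt_mul' time_le bound_lt bound_pos.le time_pos

end Objective

/-- Exchange argument in Theorem 4 (strict form): if client `i` is no slower and at
least as statistically important as client `j`, with strictness in at least one of the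
two comparisons, yet sampled with strictly smaller probability, then swapping the two
sampling probabilities strictly decreases the Problem P3 objective
`g(q) = (∑_k q_k t_k)(α ∑_k p_k²G_k²/q_k + β)`. -/
theorem stmt_12 (N : ℕ) (hN : 2 ≤ N) (t p G : Fin N → ℝ)
    (ht : ∀ k, 0 < t k) (hp : ∀ k, 0 < p k) (hG : ∀ k, 0 < G k)
    (α β : ℝ) (hα : 0 < α) (hβ : 0 ≤ β)
    (q : Fin N → ℝ) (hq : ∀ k, 0 < q k)
    (i j : Fin N) (hij : i ≠ j)
    (htij : t i ≤ t j) (hpg : p i * G i ≥ p j * G j) (hqij : q i < q j)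
    (hstrict : t i < t j ∨ p i * G i > p j * G j) :
    (∑ k, q (Equiv.swap i j k) * t k) *
        (α * ∑ k, p k ^ 2 * G k ^ 2 / q (Equiv.swap i j k) + β)
      < (∑ k, q k * t k) * (α * ∑ k, p k ^ 2 * G k ^ 2 / q k + β) := by
  have hpos (k) : 0 < p k * G k := mul_pos (hp k) (hG k)
  simp only [← mul_pow]
  exact stmt_12_general hα hβ ht (fun k ↦ pow_pos (hpos k) 2) hq hqij htij
    (pow_le_pow_left₀ (hpos j).le hpg 2)
    (hstrict.imp_right fun h ↦ pow_lt_pow_left₀ h (hpos j).le two_ne_zero)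
end
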